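/- For general lines L_1,…,L_7 in P^3 (i.e., there exists a nonzero polynomial P in the 56 coordinates of spanning vectors a_1,b_1,…,a_7,b_7 ∈ ℂ^4 such that whenever P does not vanish, each pair a_i,b_i is linearly independent, the subspaces L_i = span{a_i,b_i} pairwise intersect only in 0, and the following holds): the ℂ-vector space of homogeneous polynomials F of degree 12 in ℂ[x_0,x_1,x_2,x_3] with F ∈ I(L_i)^3 for i = 1,…,6 and F ∈ I(L_7)^2 has dimension exactly 1. Since binom(15,3) = 455 < 457 = 6·70 + 37, the system 𝓛_{12}(3,3,3,3,3,3,2) has negative virtual dimension, so it is special (unexpected). -/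

import Mathlib

/-! For general lines, restriction to `L_7` is an isomorphism from the quartics through the first
six lines onto the binary quartics. Let `q_0, …, q_4` be the quartics restricting to the powers of
the coordinate on `L_7`. The `3 × 3` Hankel determinant of the `q_(i+j)` has degree `12`; it is
cubic in the `q_j`, hence vanishes to order `3` along `L_1, …, L_6`, and it vanishes to order `2`
along `L_7`, where its matrix restricts to a matrix of rank one. If it were identically zero, its
second derivatives at a point of `L_7` would give a relation `(D q_2)(D q_4) = (D q_3)^2` for all
directional derivatives `D`. As every conic `f h = g^2` has points, some direction would then be
annihilated by the differentials of all quartics through the six lines; but these differentials are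
arbitrary.

The ranks of the conditions imposed by general lines on forms of degree `4` and `12` have to be
verified for a single choice of the lines, and this is done by elimination modulo `23`. -/

open MvPolynomial

noncomputable section

abbrev C4 : Type := Fin 4 → ℂ
abbrev R3 : Type := MvPolynomial (Fin 4) ℂ

/-- The homogeneous ideal of the line in `P^3` corresponding to a linear subspace
`L ⊆ ℂ^4`: all polynomials vanishing identically on `L`. -/
def lineIdeal (L : Submodule ℂ C4) : Ideal R3 where
  carrier := {F | ∀ v ∈ L, eval v F = 0}
  add_mem' := by
    intro a b ha hb v hv
    simp [ha v hv, hb v hv]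
  zero_mem' := by
    intro v hv
    simp
  smul_mem' := by
    intro c F hF v hv
    simp [smul_eq_mul, hF v hv]

/-- The linear system `𝓛_d(m_1, …, m_s)`: homogeneous forms of degree `d`
vanishing to order `m i` along the line `L i`, as a `ℂ`-subspace. -/
def linSys (d : ℕ) {s : ℕ} (L : Fin s → Submodule ℂ C4) (m : Fin s → ℕ) :
    Submodule ℂ R3 :=
  homogeneousSubmodule (Fin 4) ℂ d ⊓
    ⨅ i, Submodule.restrictScalars ℂ ((lineIdeal (L i)) ^ (m i))

/-- A property `Q` holds for `s` *general* lines in `P^3`: there is a nonzero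
polynomial `P` in the `8s` coordinates of spanning vectors such that whenever
`P` does not vanish, each pair of vectors is linearly independent, the spanned
planes are pairwise disjoint, and `Q` holds for these lines. -/
def GeneralLines (s : ℕ) (Q : (Fin s → Submodule ℂ C4) → Prop) : Prop :=
  ∃ P : MvPolynomial (Fin s × Fin 2 × Fin 4) ℂ, P ≠ 0 ∧
    ∀ v : Fin s → Fin 2 → C4,
      MvPolynomial.eval (fun p => v p.1 p.2.1 p.2.2) P ≠ 0 →
      (∀ i, LinearIndependent ℂ ![v i 0, v i 1]) ∧
      (∀ i j, i ≠ j →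
        Submodule.span ℂ {v i 0, v i 1} ⊓ Submodule.span ℂ {v j 0, v j 1} = ⊥) ∧
      Q (fun i => Submodule.span ℂ {v i 0, v i 1})

section Elimination

variable {p B K n : ℕ}

/-- Multiplication of each of the `n` lowest base-`B` digits of a number by `c` modulo `p`. -/
def scaleDigits (p B c : ℕ) : ℕ → ℕ → ℕ
  | 0, _ => 0
  | n + 1, N => c * (N % B) % p + B * scaleDigits p B c n (N / B)

/-- Whether Gaussian elimination modulo the prime `p` finds a pivot in each of the `n` columns of
a matrix. A row is encoded as the natural number whose base-`B` digits are its entries, the first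
column being the lowest digit, so that a row operation is a single operation on natural numbers.
Entries are reduced modulo `p` only in pivot rows, whence the growth of the digits. -/
def hasPivots (p B : ℕ) : ℕ → List ℕ → Bool
  | 0, _ => true
  | n + 1, rows => match rows.find? (fun r => r % B % p != 0) with
    | none => false
    | some r =>
      let u := scaleDigits p B ((r % B) ^ (p - 2)) n (r / B)
      hasPivots p B n ((rows.erase r).map fun s => s / B + (p - s % B % p) * u)

/-- The base-`B` digits of `N` are at most `K` and form a row vector orthogonal to `x`. -/
def DigitsOrthogonal (B K : ℕ) (x : Fin n → ZMod p) (N : ℕ) : Prop :=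
  ∃ w : Fin n → ℕ, (∀ j, w j ≤ K) ∧ N = ∑ j, w j * B ^ (j : ℕ) ∧ ∑ j, (w j : ZMod p) * x j = 0

theorem sum_mul_pow_succ (w : Fin (n + 1) → ℕ) :
    ∑ j, w j * B ^ (j : ℕ) = w 0 + B * ∑ j : Fin n, w j.succ * B ^ (j : ℕ) := by
  simp only [Fin.sum_univ_succ, Finset.mul_sum, Fin.val_zero, Fin.val_succ, pow_succ]
  congr 1 <;> [simp; exact Finset.sum_congr rfl fun j _ => by ring]

theorem sum_mul_pow_mod {w : Fin (n + 1) → ℕ} (hw : w 0 < B) :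
    (∑ j, w j * B ^ (j : ℕ)) % B = w 0 := by
  rw [sum_mul_pow_succ, Nat.add_mul_mod_self_left, Nat.mod_eq_of_lt hw]

theorem sum_mul_pow_div {w : Fin (n + 1) → ℕ} (hw : w 0 < B) :
    (∑ j, w j * B ^ (j : ℕ)) / B = ∑ j : Fin n, w j.succ * B ^ (j : ℕ) := by
  rw [sum_mul_pow_succ, Nat.add_mul_div_left _ _ (by lia), Nat.div_eq_of_lt hw, zero_add]

theorem scaleDigits_sum (c : ℕ) {w : Fin n → ℕ} (hw : ∀ j, w j < B) :
    scaleDigits p B c n (∑ j, w j * B ^ (j : ℕ)) = ∑ j, c * w j % p * B ^ (j : ℕ) := by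
  induction n with
  | zero => simp [scaleDigits]
  | succ n ih =>
    rw [scaleDigits, sum_mul_pow_mod (hw 0), sum_mul_pow_div (hw 0), ih fun j => hw j.succ,
      sum_mul_pow_succ fun j => c * w j % p]

variable [Fact p.Prime]

theorem DigitsOrthogonal.eliminate {x : Fin (n + 1) → ZMod p} {r s : ℕ} (hK : K < B)
    (hr : DigitsOrthogonal B K x r) (hs : DigitsOrthogonal B K x s) (hpivot : r % B % p ≠ 0) :
    DigitsOrthogonal B (K + p * p) (Fin.tail x)
      (s / B + (p - s % B % p) * scaleDigits p B ((r % B) ^ (p - 2)) n (r / B)) := by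
  obtain ⟨w, hw, rfl, hwx⟩ := hr
  obtain ⟨z, hz, rfl, hzx⟩ := hs
  have hwB j : w j < B := (hw j).trans_lt hK
  have hzB j : z j < B := (hz j).trans_lt hK
  have hp : 2 ≤ p := (Fact.out : p.Prime).two_le
  rw [sum_mul_pow_mod (hwB 0)] at hpivot ⊢
  rw [sum_mul_pow_mod (hzB 0), sum_mul_pow_div (hwB 0), sum_mul_pow_div (hzB 0),
    scaleDigits_sum _ fun j => hwB j.succ]
  refine ⟨fun j => z j.succ + (p - z 0 % p) * (w 0 ^ (p - 2) * w j.succ % p), fun j => ?_, ?_, ?_⟩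
  · exact add_le_add (hz _) (Nat.mul_le_mul (Nat.sub_le _ _) (Nat.mod_lt _ (by lia)).le)
  · simp only [add_mul, Finset.sum_add_distrib, Finset.mul_sum, mul_assoc]
  · have hfermat : (w 0 : ZMod p) ^ (p - 2) * w 0 = 1 := by
      rw [← pow_succ, show p - 2 + 1 = p - 1 by lia]
      refine ZMod.pow_card_sub_one_eq_one fun h => hpivot ?_
      exact Nat.mod_eq_zero_of_dvd ((ZMod.natCast_eq_zero_iff _ _).mp h)
    have hneg : ((p - z 0 % p : ℕ) : ZMod p) = -z 0 := by
      rw [Nat.cast_sub (Nat.mod_lt _ (by lia)).le]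
      simp
    rw [Fin.sum_univ_succ] at hwx hzx
    have hsum : ∑ j, ((z j.succ + (p - z 0 % p) * (w 0 ^ (p - 2) * w j.succ % p) : ℕ) : ZMod p) *
        Fin.tail x j = ∑ j : Fin n, (z j.succ : ZMod p) * x j.succ -
          z 0 * w 0 ^ (p - 2) * ∑ j : Fin n, (w j.succ : ZMod p) * x j.succ := by
      rw [Finset.mul_sum, ← Finset.sum_sub_distrib]
      refine Finset.sum_congr rfl fun j _ => ?_
      push_cast [hneg, Fin.tail]
      simp only [ZMod.natCast_mod, Nat.cast_mul, Nat.cast_pow]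
      ring
    rw [hsum]
    linear_combination hzx - z 0 * w 0 ^ (p - 2) * hwx + z 0 * x 0 * hfermat

theorem DigitsOrthogonal.eq_zero_of_tail_eq_zero {x : Fin (n + 1) → ZMod p} {r : ℕ} (hK : K < B)
    (hr : DigitsOrthogonal B K x r) (hpivot : r % B % p ≠ 0) (hx : Fin.tail x = 0) : x = 0 := by
  obtain ⟨w, hw, rfl, hwx⟩ := hr
  rw [sum_mul_pow_mod ((hw 0).trans_lt hK)] at hpivot
  have htail (j : Fin n) : x j.succ = 0 := congrFun hx j
  have hhead : (w 0 : ZMod p) * x 0 = 0 := by simpa [Fin.sum_univ_succ, htail] using hwx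
  have hw0 : (w 0 : ZMod p) ≠ 0 := fun h =>
    hpivot (Nat.mod_eq_zero_of_dvd ((ZMod.natCast_eq_zero_iff _ _).mp h))
  exact funext fun j => j.cases ((mul_eq_zero_iff_left hw0).mp hhead) htail

theorem eq_zero_of_hasPivots {rows : List ℕ} (h : hasPivots p B n rows = true)
    (hB : K + n * (p * p) < B) {x : Fin n → ZMod p}
    (hrows : ∀ r ∈ rows, DigitsOrthogonal B K x r) : x = 0 := by
  induction n generalizing K rows with
  | zero => exact Subsingleton.elim _ _
  | succ n ih =>
    rw [hasPivots] at h
    split at h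
    · exact absurd h Bool.false_ne_true
    · next r hr =>
      have hK : K < B := by lia
      have hpivot : r % B % p ≠ 0 := by simpa using List.find?_some hr
      have hr := hrows r (List.mem_of_find?_eq_some hr)
      refine hr.eq_zero_of_tail_eq_zero hK hpivot
        (ih (K := K + p * p) h (by linarith [add_mul n 1 (p * p)]) fun t ht => ?_)
      obtain ⟨s, hs, rfl⟩ := List.mem_map.mp ht
      exact hr.eliminate hK (hrows s (List.mem_of_mem_erase hs)) hpivot

end Elimination

section PackedProducts

variable {k : ℕ}

/-- The values at `f 0, …, f (k - 1)` of all monomials of degree `n`: the products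
`f 0 (m 0) * ⋯ * f (k - 1) (m (k - 1))` with `f i e` in the role of the `e`-th power of the `i`-th
variable. -/
def monomialValues (f : Fin k → ℕ → ℕ) (n : ℕ) : List ℕ :=
  (List.Nat.antidiagonalTuple k n).map fun m => ∏ i, f i (m i)

/-- A list of base-`B` digits encoded by the number they represent and their number. -/
def packDigits (B : ℕ) (l : List ℕ) : ℕ × ℕ :=
  (Nat.ofDigits B l, l.length)

/-- The encoding of the concatenation of some lists of digits, the `i`-th of them multiplied by
the `i`-th entry of the first argument. -/
def packConcat (B : ℕ) : List ℕ → List (ℕ × ℕ) → ℕ × ℕ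
  | a :: as, (N, l) :: T =>
    (a * N + B ^ l * (packConcat B as T).1, l + (packConcat B as T).2)
  | _, _ => (0, 0)

/-- The application of `packConcat` to all nonempty final segments of a list. -/
def packConcatTails (B : ℕ) (as : List ℕ) : List (ℕ × ℕ) → List (ℕ × ℕ)
  | [] => []
  | b :: T => packConcat B as (b :: T) :: packConcatTails B as T

/-- The encodings of the lists `monomialValues f n` for `n = d, …, 0`, obtained by adding one
variable at a time. -/
def packMonomials (B d : ℕ) : {k : ℕ} → (Fin k → ℕ → ℕ) → List (ℕ × ℕ)
  | 0, _ => (List.range (d + 1)).reverse.map fun n => if n = 0 then (1, 1) else (0, 0)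
  | _ + 1, f => packConcatTails B ((List.range (d + 1)).map (f 0)) (packMonomials B d (Fin.tail f))

theorem monomialValues_succ (f : Fin (k + 1) → ℕ → ℕ) (n : ℕ) :
    monomialValues f n = (List.Nat.antidiagonal n).flatMap fun ij =>
      (monomialValues (Fin.tail f) ij.2).map (f 0 ij.1 * ·) := by
  simp [monomialValues, List.Nat.antidiagonalTuple, List.map_flatMap, Fin.prod_univ_succ,
    Function.comp_def, Fin.tail]

theorem packDigits_map_mul_append (B a : ℕ) (l l' : List ℕ) :
    packDigits B (l.map (a * ·) ++ l') = (a * (packDigits B l).1 +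
      B ^ (packDigits B l).2 * (packDigits B l').1, (packDigits B l).2 + (packDigits B l').2) := by
  simp [packDigits, Nat.ofDigits_append, Nat.mul_ofDigits]

theorem packConcat_range (B : ℕ) (L : ℕ → List ℕ) {n d : ℕ} (hn : n ≤ d) (a : ℕ → ℕ) :
    packConcat B ((List.range (d + 1)).map a)
        ((List.range (n + 1)).reverse.map fun j => packDigits B (L j)) =
      packDigits B ((List.Nat.antidiagonal n).flatMap fun ij => (L ij.2).map (a ij.1 * ·)) := by
  induction n generalizing d a with
  | zero =>
    simpa [List.range_succ_eq_map, packConcat, packDigits] using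
      (packDigits_map_mul_append B (a 0) (L 0) []).symm
  | succ n ih =>
    obtain ⟨d, rfl⟩ : ∃ e, d = e + 1 := ⟨d - 1, by lia⟩
    have ih := ih (Nat.le_of_succ_le_succ hn) (a ∘ Nat.succ)
    rw [← List.map_map] at ih
    rw [List.range_succ_eq_map (n := d + 1), List.map_cons, List.range_succ (n := n + 1),
      List.reverse_append, List.reverse_singleton, List.singleton_append, List.map_cons,
      List.Nat.antidiagonal_succ, List.flatMap_cons, packDigits_map_mul_append,
      packConcat.eq_def]
    simp only [ih, List.flatMap_map]
    rfl

theorem packConcatTails_range (B : ℕ) (L : ℕ → List ℕ) {n d : ℕ} (hn : n ≤ d + 1) (a : ℕ → ℕ) :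
    packConcatTails B ((List.range (d + 1)).map a)
        ((List.range n).reverse.map fun j => packDigits B (L j)) =
      (List.range n).reverse.map fun j => packDigits B
        ((List.Nat.antidiagonal j).flatMap fun ij => (L ij.2).map (a ij.1 * ·)) := by
  induction n with
  | zero => rfl
  | succ n ih =>
    have h := packConcat_range B L (Nat.le_of_succ_le_succ hn) a
    rw [List.range_succ (n := n), List.reverse_append, List.reverse_singleton,
      List.singleton_append, List.map_cons] at h ⊢
    rw [packConcatTails, h, ih (by lia), List.map_cons]

theorem packMonomials_eq (B d : ℕ) (f : Fin k → ℕ → ℕ) :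
    packMonomials B d f =
      (List.range (d + 1)).reverse.map fun n => packDigits B (monomialValues f n) := by
  induction k with
  | zero =>
    refine List.map_congr_left fun n _ => ?_
    cases n <;> simp [monomialValues, packDigits]
  | succ k ih =>
    simp only [packMonomials, ih, packConcatTails_range B _ le_rfl, monomialValues_succ]

end PackedProducts

section Generic

variable {K : Type*} [Field K] {s : ℕ}

/-- A property of the vectors `v i 0, v i 1` spanning `s` lines holds generically if it holds
outside the zero locus of some nonzero polynomial in their coordinates. -/
def Generically (Q : (Fin s → Fin 2 → Fin 4 → K) → Prop) : Prop :=
  ∃ P : MvPolynomial (Fin s × Fin 2 × Fin 4) K, P ≠ 0 ∧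
    ∀ v, eval (fun i => v i.1 i.2.1 i.2.2) P ≠ 0 → Q v

namespace Generically

variable {Q Q' : (Fin s → Fin 2 → Fin 4 → K) → Prop}

theorem mono (h : Generically Q) (hQ : ∀ v, Q v → Q' v) : Generically Q' := by
  obtain ⟨P, hP, hPQ⟩ := h
  exact ⟨P, hP, fun v hv => hQ v (hPQ v hv)⟩

theorem and (h : Generically Q) (h' : Generically Q') : Generically fun v => Q v ∧ Q' v := by
  obtain ⟨P, hP, hPQ⟩ := h
  obtain ⟨P', hP', hPQ'⟩ := h'
  refine ⟨P * P', mul_ne_zero hP hP', fun v hv => ?_⟩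
  rw [map_mul] at hv
  exact ⟨hPQ v (left_ne_zero_of_mul hv), hPQ' v (right_ne_zero_of_mul hv)⟩

theorem forall_finite {ι : Type*} [Finite ι] {R : ι → (Fin s → Fin 2 → Fin 4 → K) → Prop}
    (h : ∀ i, Generically (R i)) : Generically fun v => ∀ i, R i v := by
  cases nonempty_fintype ι
  choose P hP hPR using h
  refine ⟨∏ i, P i, Finset.prod_ne_zero_iff.mpr fun i _ => hP i, fun v hv i => hPR i v ?_⟩
  rw [map_prod] at hv
  exact Finset.prod_ne_zero_iff.mp hv i (Finset.mem_univ i)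

end Generically

/-- `P` is the determinant of the product of `M` with an integral lift of a left inverse of its
reduction: it takes the value `1` at `w`. -/
theorem exists_ne_zero_forall_mulVec_injective {σ ι κ : Type*} [Finite ι] [Fintype κ]
    [CharZero K] {p : ℕ} [Fact p.Prime] (M : Matrix ι κ (MvPolynomial σ ℤ)) (w : σ → ZMod p)
    (hw : Function.Injective (M.map (aeval w)).mulVec) :
    ∃ P : MvPolynomial σ K, P ≠ 0 ∧
      ∀ v : σ → K, eval v P ≠ 0 → Function.Injective (M.map (aeval v)).mulVec := by
  classical
  cases nonempty_fintype ι
  obtain ⟨g, hg⟩ := (Matrix.toLin' (M.map (aeval w))).exists_leftInverse_of_injective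
    (LinearMap.ker_eq_bot.mpr hw)
  let L : Matrix κ ι (MvPolynomial σ ℤ) := g.toMatrix'.map fun a => (a.val : MvPolynomial σ ℤ)
  have hL : L.map (aeval w) = g.toMatrix' := by
    ext
    simp only [L, Matrix.map_apply, map_natCast, ZMod.natCast_zmod_val]
  have hone : aeval w (L * M).det = 1 := by
    rw [AlgHom.map_det, AlgHom.mapMatrix_apply, Matrix.map_mul, hL,
      ← LinearMap.toMatrix'_toLin' (M.map (aeval w)), ← LinearMap.toMatrix'_comp, hg,
      LinearMap.toMatrix'_id, Matrix.det_one]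
  refine ⟨map (Int.castRingHom K) (L * M).det, fun h => ?_, fun v hv => ?_⟩
  · rw [map_eq_zero_iff _ (map_injective _ (RingHom.injective_int _))] at h
    simp [h] at hone
  · rw [eval_map, ← algebraMap_int_eq, ← aeval_def, AlgHom.map_det, AlgHom.mapMatrix_apply,
      Matrix.map_mul] at hv
    have hinj := Matrix.mulVec_injective_of_isUnit
      ((Matrix.isUnit_iff_isUnit_det _).mpr (isUnit_iff_ne_zero.mpr hv))
    refine Function.Injective.of_comp (f := (L.map (aeval v)).mulVec) ?_
    simpa [Function.comp_def, Matrix.mulVec_mulVec] using hinj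

end Generic

section IteratedDerivatives

variable {σ R : Type*} [CommSemiring R]

/-- The successive partial derivatives with respect to the variables listed in `l`. -/
def iteratedPDeriv (l : List σ) : MvPolynomial σ R →ₗ[R] MvPolynomial σ R :=
  (l.map fun i => (pderiv i).toLinearMap).prod

theorem iteratedPDeriv_nil (F : MvPolynomial σ R) : iteratedPDeriv [] F = F := rfl

theorem iteratedPDeriv_cons (k : σ) (l : List σ) (F : MvPolynomial σ R) :
    iteratedPDeriv (k :: l) F = pderiv k (iteratedPDeriv l F) := rfl

theorem iteratedPDeriv_monomial [Fintype σ] [DecidableEq σ] (l : List σ) (m : σ →₀ ℕ) (a : R) :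
    iteratedPDeriv l (monomial m a) = monomial (m - Multiset.toFinsupp l)
      (a * ∏ i, ((m i).descFactorial (l.count i) : R)) := by
  induction l with
  | nil => simp [iteratedPDeriv]
  | cons k l ih =>
    have hfactor (i : σ) : (m i).descFactorial ((k :: l).count i) =
        (m i).descFactorial (l.count i) * if k = i then m i - l.count i else 1 := by
      by_cases h : k = i
      · simp [h, Nat.descFactorial_succ, mul_comm]
      · simp [h]
    have hsub : m - Multiset.toFinsupp (l : Multiset σ) - Finsupp.single k 1 =
        m - Multiset.toFinsupp ((k :: l : List σ) : Multiset σ) := by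
      rw [tsub_tsub, ← Multiset.toFinsupp_singleton, ← map_add, add_comm, Multiset.singleton_add,
        Multiset.cons_coe]
    rw [iteratedPDeriv_cons, ih, pderiv_monomial, hsub, mul_assoc]
    simp only [hfactor, Nat.cast_mul, Finset.prod_mul_distrib]
    simp

end IteratedDerivatives

section Conditions

variable {s d : ℕ}

/-- The condition on quaternary forms given by a derivative at a point of one of `s` lines: the
lines being spanned by `v i 0, v i 1`, it is the vanishing at the point `v i 0 + t • v i 1` of the
iterated partial derivative with respect to the variables in `vars`. -/
structure Condition (s : ℕ) where
  line : Fin s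
  param : ℕ
  vars : List (Fin 4)

namespace Condition

variable {R : Type*} [CommSemiring R] (c : Condition s) (v : Fin s → Fin 2 → Fin 4 → R)

/-- The point at which the derivative is evaluated. -/
def point : Fin 4 → R :=
  fun i => v c.line 0 i + c.param * v c.line 1 i

/-- The contribution of the `e`-th power of the `i`-th variable to the value of the condition on a
monomial. -/
def factor (i : Fin 4) (e : ℕ) : R :=
  e.descFactorial (c.vars.count i) * c.point v i ^ (e - c.vars.count i)

theorem map_factor {R' : Type*} [CommSemiring R'] (φ : R →+* R') (i : Fin 4) (e : ℕ) :
    φ (c.factor v i e) = c.factor (fun i j k => φ (v i j k)) i e := by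
  simp [factor, point]

/-- The linear form whose vanishing is the condition. -/
def functional : MvPolynomial (Fin 4) R →ₗ[R] R :=
  (aeval (c.point v)).toLinearMap ∘ₗ iteratedPDeriv c.vars

theorem functional_monomial (m : Fin 4 →₀ ℕ) (a : R) :
    c.functional v (monomial m a) = a * ∏ i, c.factor v i (m i) := by
  simp only [functional, LinearMap.comp_apply, AlgHom.toLinearMap_apply, iteratedPDeriv_monomial,
    aeval_monomial, Finsupp.prod_fintype, pow_zero, implies_true, factor, Finset.prod_mul_distrib]
  simp [mul_assoc]

end Condition

/-- The form of degree `d` with the given list of coefficients. -/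
def formOfCoeffs {R : Type*} [CommSemiring R] (k d : ℕ) :
    (Fin (List.Nat.antidiagonalTuple k d).length → R) →ₗ[R] MvPolynomial (Fin k) R :=
  ∑ j, monomial (Finsupp.equivFunOnFinite.symm (List.Nat.antidiagonalTuple k d)[j]) ∘ₗ
    LinearMap.proj j

section formOfCoeffs

variable {R : Type*} [CommSemiring R] {k : ℕ}

theorem formOfCoeffs_apply (x : Fin (List.Nat.antidiagonalTuple k d).length → R) :
    formOfCoeffs k d x = ∑ j,
      monomial (Finsupp.equivFunOnFinite.symm (List.Nat.antidiagonalTuple k d)[j]) (x j) := by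
  simp [formOfCoeffs]

theorem isHomogeneous_formOfCoeffs (x : Fin (List.Nat.antidiagonalTuple k d).length → R) :
    (formOfCoeffs k d x).IsHomogeneous d := by
  rw [formOfCoeffs_apply]
  refine IsHomogeneous.sum _ _ _ fun j _ => isHomogeneous_monomial _ ?_
  rw [Finsupp.degree_eq_sum]
  exact List.Nat.mem_antidiagonalTuple.mp (List.getElem_mem j.2)

theorem exists_formOfCoeffs_eq {F : MvPolynomial (Fin k) R} (hF : F.IsHomogeneous d) :
    ∃ x, formOfCoeffs k d x = F := by
  suffices F ∈ LinearMap.range (formOfCoeffs (R := R) k d) from this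
  rw [← support_sum_monomial_coeff F]
  refine Submodule.sum_mem _ fun m hm => ?_
  have hm : (m : Fin k → ℕ) ∈ List.Nat.antidiagonalTuple k d := by
    rw [List.Nat.mem_antidiagonalTuple, ← Finsupp.degree_eq_sum]
    exact by_contra fun h => mem_support_iff.mp hm (hF.coeff_eq_zero h)
  obtain ⟨j, hj, hjm⟩ := List.getElem_of_mem hm
  refine ⟨Pi.single ⟨j, hj⟩ (coeff m F), ?_⟩
  rw [formOfCoeffs_apply, Finset.sum_eq_single ⟨j, hj⟩ (by simp +contextual) (by simp)]
  simp only [Fin.getElem_fin, hjm, Pi.single_eq_same, Finsupp.equivFunOnFinite_symm_coe]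

end formOfCoeffs

section Unisolvence

variable {R K : Type*} [CommSemiring R] [Field K]

/-- The values of the conditions in `C` on the monomials of degree `d`. -/
def conditionMatrix (d : ℕ) (C : List (Condition s)) (v : Fin s → Fin 2 → Fin 4 → R) :
    Matrix (Fin C.length) (Fin (List.Nat.antidiagonalTuple 4 d).length) R :=
  Matrix.of fun i j => ∏ k, C[i].factor v k ((List.Nat.antidiagonalTuple 4 d)[j] k)

/-- The conditions in `C` determine forms of degree `d`: they have full rank. -/
def IsUnisolvent (d : ℕ) (C : List (Condition s)) (v : Fin s → Fin 2 → Fin 4 → R) : Prop :=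
  Function.Injective (conditionMatrix d C v).mulVec

theorem conditionMatrix_map {R' : Type*} [CommSemiring R'] (φ : R →+* R') (C : List (Condition s))
    (v : Fin s → Fin 2 → Fin 4 → R) :
    (conditionMatrix d C v).map φ = conditionMatrix d C fun i j k => φ (v i j k) := by
  ext
  simp [conditionMatrix, Condition.map_factor]

theorem conditionMatrix_X_map_aeval {S : Type*} [CommSemiring S] [Algebra S R]
    (C : List (Condition s)) (v : Fin s × Fin 2 × Fin 4 → R) :
    (conditionMatrix d C fun i j k =>
      (X (i, j, k) : MvPolynomial (Fin s × Fin 2 × Fin 4) S)).map (aeval v) =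
      conditionMatrix d C fun i j k => v (i, j, k) := by
  have hmap := conditionMatrix_map (d := d) (RingHomClass.toRingHom (aeval (R := S) v)) C
    fun i j k => X (i, j, k)
  simpa only [RingHom.coe_coe, aeval_X] using hmap

theorem functional_formOfCoeffs (C : List (Condition s)) (v : Fin s → Fin 2 → Fin 4 → R)
    (x : Fin (List.Nat.antidiagonalTuple 4 d).length → R) (i : Fin C.length) :
    C[i].functional v (formOfCoeffs 4 d x) = (conditionMatrix d C v).mulVec x i := by
  simp [formOfCoeffs_apply, Condition.functional_monomial, Matrix.mulVec, dotProduct,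
    conditionMatrix, mul_comm]

theorem IsUnisolvent.eq_zero {C : List (Condition s)} {v : Fin s → Fin 2 → Fin 4 → R}
    (h : IsUnisolvent d C v) {F : MvPolynomial (Fin 4) R} (hF : F.IsHomogeneous d)
    (hC : ∀ c ∈ C, c.functional v F = 0) : F = 0 := by
  obtain ⟨x, rfl⟩ := exists_formOfCoeffs_eq hF
  suffices x = 0 by rw [this, map_zero]
  refine h (funext fun i => ?_)
  rw [Matrix.mulVec_zero, Pi.zero_apply, ← functional_formOfCoeffs C v x i]
  exact hC _ (List.getElem_mem _)

theorem IsUnisolvent.exists_functional_eq {C : List (Condition s)}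
    {v : Fin s → Fin 2 → Fin 4 → K} (h : IsUnisolvent d C v)
    (hlen : C.length = (List.Nat.antidiagonalTuple 4 d).length) (y : Condition s → K) :
    ∃ F : MvPolynomial (Fin 4) K, F.IsHomogeneous d ∧ ∀ c ∈ C, c.functional v F = y c := by
  have hsurj : Function.Surjective (conditionMatrix d C v).mulVecLin :=
    (LinearMap.injective_iff_surjective_of_finrank_eq_finrank (by simp [hlen])).mp h
  obtain ⟨x, hx⟩ := hsurj fun i => y C[i]
  refine ⟨formOfCoeffs 4 d x, isHomogeneous_formOfCoeffs x, fun c hc => ?_⟩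
  obtain ⟨i, hi, rfl⟩ := List.getElem_of_mem hc
  exact (functional_formOfCoeffs C v x ⟨i, hi⟩).trans (congrFun hx ⟨i, hi⟩)

/-- The values modulo `p` of a condition on the monomials of degree `d`, for lines with the integral
coordinates `w`, as the base-`B` digits of a number. -/
def Condition.packedRow (p B d : ℕ) (w : Fin s → Fin 2 → Fin 4 → ℕ) (c : Condition s) : ℕ :=
  ((packMonomials B d fun i e => c.factor w i e % p).headD (0, 0)).1

/-- Whether the conditions in `C` have full rank modulo `p` on the forms of degree `d`, for lines
with the integral coordinates `w`. -/
def isUnisolventMod (p B d : ℕ) (w : Fin s → Fin 2 → Fin 4 → ℕ) (C : List (Condition s)) : Bool :=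
  hasPivots p B (List.Nat.antidiagonalTuple 4 d).length (C.map (Condition.packedRow p B d w))

theorem ofDigits_map {α : Type*} (B : ℕ) (f : α → ℕ) (l : List α) :
    Nat.ofDigits B (l.map f) = ∑ j : Fin l.length, f l[j] * B ^ (j : ℕ) := by
  induction l with
  | nil => rfl
  | cons a l ih =>
    simp only [List.map_cons, Nat.ofDigits_cons, ih, List.length_cons, sum_mul_pow_succ]
    rfl

theorem Condition.packedRow_eq (p B d : ℕ) (w : Fin s → Fin 2 → Fin 4 → ℕ) (c : Condition s) :
    c.packedRow p B d w = ∑ j : Fin (List.Nat.antidiagonalTuple 4 d).length,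
      (∏ i, c.factor w i ((List.Nat.antidiagonalTuple 4 d)[j] i) % p) * B ^ (j : ℕ) := by
  rw [packedRow, packMonomials_eq, List.range_succ, List.reverse_append, List.reverse_singleton,
    List.singleton_append, List.map_cons, List.headD_cons, packDigits, monomialValues, ofDigits_map]

variable {p B : ℕ} [Fact p.Prime] {w : Fin s → Fin 2 → Fin 4 → ℕ} {C : List (Condition s)}

theorem isUnisolvent_natCast_of_isUnisolventMod (h : isUnisolventMod p B d w C = true)
    (hB : p ^ 4 + (List.Nat.antidiagonalTuple 4 d).length * (p * p) < B) :
    IsUnisolvent d C fun i j k => (w i j k : ZMod p) := by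
  refine (injective_iff_map_eq_zero (conditionMatrix d C _).mulVecLin).mpr fun x hx => ?_
  refine eq_zero_of_hasPivots h hB fun r hr => ?_
  obtain ⟨c, hc, rfl⟩ := List.mem_map.mp hr
  refine ⟨_, fun j => ?_, c.packedRow_eq p B d w, ?_⟩
  · refine (Finset.prod_le_pow_card _ _ p fun i _ => ?_).trans_eq (by simp)
    exact (Nat.mod_lt _ (Fact.out : p.Prime).pos).le
  · obtain ⟨i, hi, rfl⟩ := List.getElem_of_mem hc
    refine Eq.trans (Finset.sum_congr rfl fun j _ => ?_) (congrFun hx ⟨i, hi⟩)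
    have hcast := Condition.map_factor C[i] w (Nat.castRingHom (ZMod p))
    simp only [Nat.coe_castRingHom] at hcast
    simp [conditionMatrix, hcast]

theorem generically_isUnisolvent [CharZero K] (h : isUnisolventMod p B d w C = true)
    (hB : p ^ 4 + (List.Nat.antidiagonalTuple 4 d).length * (p * p) < B) :
    Generically fun v : Fin s → Fin 2 → Fin 4 → K => IsUnisolvent d C v := by
  obtain ⟨P, hP, hPM⟩ := exists_ne_zero_forall_mulVec_injective (K := K)
    (conditionMatrix d C fun i j k => (X (i, j, k) : MvPolynomial (Fin s × Fin 2 × Fin 4) ℤ))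
    (fun i => (w i.1 i.2.1 i.2.2 : ZMod p)) (by
      rw [conditionMatrix_X_map_aeval]
      exact isUnisolvent_natCast_of_isUnisolventMod h hB)
  refine ⟨P, hP, fun v hv => ?_⟩
  simpa only [IsUnisolvent, conditionMatrix_X_map_aeval] using hPM _ hv

end Unisolvence

end Conditions

section RestrictionToLine

variable {σ R K : Type*} [CommSemiring R] [Field K]

/-- The restriction of a polynomial to the line parametrized by `t ↦ a + t • b`. -/
def lineRestriction (a b : σ → R) : MvPolynomial σ R →ₐ[R] Polynomial R :=
  aeval fun i => Polynomial.C (a i) + Polynomial.X * Polynomial.C (b i)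

theorem eval_lineRestriction (a b : σ → R) (F : MvPolynomial σ R) (t : R) :
    (lineRestriction a b F).eval t = eval (a + t • b) F := by
  rw [← Polynomial.coe_aeval_eq_eval, lineRestriction, ← AlgHom.comp_apply, comp_aeval,
    ← coe_aeval_eq_eval]
  simp only [map_add, map_mul, Polynomial.aeval_X, Polynomial.aeval_C, aeval_eq_eval]
  rfl

theorem natDegree_lineRestriction_le (a b : σ → R) {F : MvPolynomial σ R} {d : ℕ}
    (hF : F.IsHomogeneous d) : (lineRestriction a b F).natDegree ≤ d := by
  refine (aeval_natDegree_le F hF.totalDegree_le _ fun i => ?_).trans_eq (mul_one d)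
  compute_degree

theorem lineRestriction_eq_of_eval_eq [CharZero K] {a b : σ → K} {F : MvPolynomial σ K}
    {g : Polynomial K} {d : ℕ} (hF : F.IsHomogeneous d) (hg : g.natDegree ≤ d)
    (h : ∀ t < d + 1, eval (a + (t : K) • b) F = g.eval (t : K)) : lineRestriction a b F = g := by
  refine Polynomial.eq_of_natDegree_lt_card_of_eval_eq _ _
    (f := fun t : Fin (d + 1) => ((t : ℕ) : K)) ?_ (fun t => ?_) ?_
  · exact Nat.cast_injective.comp Fin.val_injective
  · rw [eval_lineRestriction, h t t.2]
  · rw [Fintype.card_fin, Nat.lt_succ_iff]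
    exact max_le (natDegree_lineRestriction_le a b hF) hg

theorem eval_smul_of_isHomogeneous {F : MvPolynomial σ R} {d : ℕ} (hF : F.IsHomogeneous d)
    (r : R) (x : σ → R) : eval (r • x) F = r ^ d * eval x F := by
  rw [eval_eq, eval_eq, Finset.mul_sum]
  refine Finset.sum_congr rfl fun m hm => ?_
  rw [hF.degree_eq_sum_deg_support hm, ← Finset.prod_pow_eq_pow_sum]
  simp only [Pi.smul_apply, smul_eq_mul, mul_pow, Finset.prod_mul_distrib]
  ring

theorem eval_smul_add_smul_eq_zero [Infinite K] {a b : σ → K} {F : MvPolynomial σ K} {d : ℕ}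
    (hF : F.IsHomogeneous d) (h : lineRestriction a b F = 0) (x y : K) :
    eval (x • a + y • b) F = 0 := by
  have hne (x : K) (hx : x ≠ 0) : eval (x • a + y • b) F = 0 := by
    have hfactor : x • a + y • b = x • (a + (y / x) • b) := by
      rw [smul_add, smul_smul, mul_div_cancel₀ _ hx]
    rw [hfactor, eval_smul_of_isHomogeneous hF, ← eval_lineRestriction, h,
      Polynomial.eval_zero, mul_zero]
  have hzero : lineRestriction (y • b) a F = 0 := by
    refine Polynomial.eq_zero_of_infinite_isRoot _
      ((Set.finite_singleton (0 : K)).infinite_compl.mono fun x hx => ?_)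
    rw [Set.mem_ofPred_eq, Polynomial.IsRoot, eval_lineRestriction, add_comm, hne x hx]
  rw [add_comm, ← eval_lineRestriction, hzero, Polynomial.eval_zero]

end RestrictionToLine

section LineIdeals

theorem mem_lineIdeal_span_pair_iff {a b : C4} {F : R3} {d : ℕ} (hF : F.IsHomogeneous d) :
    F ∈ lineIdeal (Submodule.span ℂ {a, b}) ↔ lineRestriction a b F = 0 := by
  refine ⟨fun h => lineRestriction_eq_of_eval_eq hF (by simp) fun t _ => ?_, fun h x hx => ?_⟩
  · simpa using h _ (Submodule.mem_span_pair.mpr ⟨1, t, by rw [one_smul]⟩)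
  · obtain ⟨r, t, rfl⟩ := Submodule.mem_span_pair.mp hx
    exact eval_smul_add_smul_eq_zero hF h r t

theorem derivation_apply_mem_pow {R A : Type*} [CommRing R] [CommRing A] [Algebra R A]
    (D : Derivation R A A) (I : Ideal A) {n : ℕ} {F : A} (hF : F ∈ I ^ (n + 1)) :
    D F ∈ I ^ n := by
  induction n generalizing F with
  | zero => simp
  | succ n ih =>
    rw [pow_succ'] at hF
    refine Submodule.mul_induction_on hF (fun a ha b hb => ?_) fun a b ha hb => ?_
    · rw [Derivation.leibniz, smul_eq_mul, smul_eq_mul, pow_succ']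
      exact add_mem (Ideal.mul_mem_mul ha (ih hb)) (pow_succ' I n ▸ Ideal.mul_mem_right _ _ hb)
    · exact map_add D a b ▸ add_mem ha hb

theorem iteratedPDeriv_mem_pow {σ R : Type*} [CommRing R] (I : Ideal (MvPolynomial σ R))
    (l : List σ) {n : ℕ} {F : MvPolynomial σ R} (hF : F ∈ I ^ (n + l.length)) :
    iteratedPDeriv l F ∈ I ^ n := by
  induction l generalizing n with
  | nil => exact hF
  | cons k l ih =>
    rw [iteratedPDeriv_cons]
    refine derivation_apply_mem_pow _ _ (ih ?_)
    rwa [add_right_comm]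

/-- The lines spanned by the pairs of vectors `v i 0, v i 1`. -/
abbrev spannedLine {s : ℕ} (v : Fin s → Fin 2 → C4) (i : Fin s) : Submodule ℂ C4 :=
  Submodule.span ℂ {v i 0, v i 1}

theorem add_smul_mem_spannedLine {s : ℕ} (v : Fin s → Fin 2 → C4) (i : Fin s) (t : ℂ) :
    v i 0 + t • v i 1 ∈ spannedLine v i :=
  Submodule.mem_span_pair.mpr ⟨1, t, by rw [one_smul]⟩

theorem mem_linSys {s d : ℕ} {L : Fin s → Submodule ℂ C4} {m : Fin s → ℕ} {F : R3} :
    F ∈ linSys d L m ↔ F.IsHomogeneous d ∧ ∀ i, F ∈ lineIdeal (L i) ^ m i := by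
  simp [linSys]

end LineIdeals

section Conditions

variable {s d : ℕ} {v : Fin s → Fin 2 → C4} {F : R3} {m : Fin s → ℕ}

namespace Condition

theorem functional_eq_eval {R : Type*} [CommSemiring R] (c : Condition s)
    (v : Fin s → Fin 2 → Fin 4 → R) (F : MvPolynomial (Fin 4) R) : c.functional v F =
      eval (v c.line 0 + (c.param : R) • v c.line 1) (iteratedPDeriv c.vars F) := by
  rw [functional, LinearMap.comp_apply, AlgHom.toLinearMap_apply, aeval_eq_eval]
  rfl

theorem functional_eq_zero {c : Condition s} {m : ℕ} (hc : c.vars.length < m)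
    (hF : F ∈ lineIdeal (spannedLine v c.line) ^ m) : c.functional v F = 0 := by
  obtain ⟨n, rfl⟩ := Nat.exists_eq_add_of_lt hc
  have hmem := iteratedPDeriv_mem_pow (n := n + 1) _ c.vars (by rwa [add_comm, ← add_assoc])
  rw [functional_eq_eval]
  exact Ideal.pow_le_self n.succ_ne_zero hmem _ (add_smul_mem_spannedLine v c.line c.param)

end Condition

/-- Enough conditions for a form of degree `d` to vanish to order `m i` along the `i`-th line for
all `i`: a derivative of order `e` involving only the last two variables has to vanish at
`d + 1 - e` points of the line. -/
def conditions (d : ℕ) (m : Fin s → ℕ) : List (Condition s) :=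
  (List.finRange s).flatMap fun i => (List.range (m i)).flatMap fun e =>
    (List.Nat.antidiagonal e).flatMap fun ab => (List.range (d + 1 - e)).map fun t =>
      ⟨i, t, List.replicate ab.1 2 ++ List.replicate ab.2 3⟩

theorem length_vars_lt_of_mem_conditions {c : Condition s} (hc : c ∈ conditions d m) :
    c.vars.length < m c.line := by
  simp only [conditions, List.mem_flatMap, List.mem_map, List.mem_range,
    List.Nat.mem_antidiagonal] at hc
  obtain ⟨i, -, e, he, ab, hab, t, -, rfl⟩ := hc
  simpa [hab]

theorem functional_eq_zero_of_mem_linSys {d' : ℕ} (hF : F ∈ linSys d' (spannedLine v) m)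
    {c : Condition s} (hc : c ∈ conditions d m) : c.functional v F = 0 :=
  c.functional_eq_zero (length_vars_lt_of_mem_conditions hc) ((mem_linSys.mp hF).2 _)

theorem mem_linSys_of_functional_eq_zero (hm : ∀ i, m i ≤ 1) (hF : F.IsHomogeneous d)
    (h : ∀ c ∈ conditions d m, c.functional v F = 0) : F ∈ linSys d (spannedLine v) m := by
  refine mem_linSys.mpr ⟨hF, fun i => ?_⟩
  obtain hi | hi := Nat.le_one_iff_eq_zero_or_eq_one.mp (hm i)
  · simp [hi]
  rw [hi, pow_one, mem_lineIdeal_span_pair_iff hF]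
  refine lineRestriction_eq_of_eval_eq hF (by simp) fun t ht => ?_
  have hc : (⟨i, t, []⟩ : Condition s) ∈ conditions d m := by
    simp only [conditions, List.mem_flatMap, List.mem_map, List.mem_range]
    exact ⟨i, List.mem_finRange i, 0, by lia, (0, 0), by simp, t, ht, rfl⟩
  simpa only [Condition.functional_eq_eval, iteratedPDeriv_nil, Polynomial.eval_zero] using h _ hc

theorem exists_mem_linSys_functional_eq {C : List (Condition s)} (hm : ∀ i, m i ≤ 1)
    (hC : ∀ c ∈ C, m c.line = 0) (hv : IsUnisolvent d (conditions d m ++ C) v)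
    (hlen : (conditions d m ++ C).length = (List.Nat.antidiagonalTuple 4 d).length)
    (y : Condition s → ℂ) :
    ∃ F ∈ linSys d (spannedLine v) m, ∀ c ∈ C, c.functional v F = y c := by
  obtain ⟨F, hF, hFy⟩ := hv.exists_functional_eq hlen fun c => if m c.line = 0 then y c else 0
  refine ⟨F, mem_linSys_of_functional_eq_zero hm hF fun c hc => ?_, fun c hc => ?_⟩
  · rw [hFy c (List.mem_append_left _ hc),
      if_neg (Nat.ne_zero_of_lt (length_vars_lt_of_mem_conditions hc))]
  · rw [hFy c (List.mem_append_right _ hc), if_pos (hC c hc)]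

end Conditions

section Determinants

variable {ι R : Type*} [Fintype ι] [DecidableEq ι] [CommRing R] {I : Ideal R} {A : Matrix ι ι R}

theorem det_mem_pow_card {s : Finset ι} (h : ∀ i ∈ s, ∀ j, A i j ∈ I) : A.det ∈ I ^ s.card := by
  rw [← Matrix.det_transpose, Matrix.det_apply']
  refine sum_mem fun τ _ => Ideal.mul_mem_left _ _ ?_
  rw [← Finset.prod_mul_prod_compl s]
  refine Ideal.mul_mem_right _ _ ?_
  rw [← Finset.prod_const]
  exact Ideal.prod_mem_prod fun i hi => h i hi (τ i)

theorem det_mem_pow_of_sub_mul_mem (u w : ι → R) (h : ∀ i j, A i j - u i * w j ∈ I) :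
    A.det ∈ I ^ (Fintype.card ι - 1) := by
  let E : ι → ι → R := fun i j => A i j - u i * w j
  have hsum : A.det = ∑ s : Finset ι, (Matrix.of (s.piecewise E fun i => u i • w)).det := by
    refine Eq.trans ?_ (Matrix.detRowAlternating.toMultilinearMap.map_add_univ E fun i => u i • w)
    refine congrArg Matrix.det (Matrix.ext fun i j => ?_)
    simp [E]
  rw [hsum]
  refine sum_mem fun s _ => ?_
  by_cases hs : Fintype.card ι - 1 ≤ s.card
  · refine Ideal.pow_le_pow_right hs (det_mem_pow_card fun i hi j => ?_)
    simpa only [Matrix.of_apply, Finset.piecewise_eq_of_mem _ _ _ hi] using h i j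
  · obtain ⟨i, hi, j, hj, hij⟩ := Finset.one_lt_card.mp
      (show 1 < sᶜ.card by rw [Finset.card_compl]; lia)
    rw [Finset.mem_compl] at hi hj
    have hscale : (Matrix.of (s.piecewise E fun i => u i • w)).det =
        (∏ i, if i ∈ s then 1 else u i) * (Matrix.of (s.piecewise E fun _ => w)).det := by
      rw [← Matrix.det_mul_column]
      congr! 1
      ext k l
      by_cases hk : k ∈ s <;> simp [hk]
    rw [hscale, Matrix.det_zero_of_row_eq hij (funext fun k => by simp [hi, hj]), mul_zero]
    exact zero_mem _

theorem isHomogeneous_det {σ : Type*} {A : Matrix ι ι (MvPolynomial σ R)} {d : ℕ}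
    (h : ∀ i j, (A i j).IsHomogeneous d) : A.det.IsHomogeneous (Fintype.card ι * d) := by
  rw [Matrix.det_apply]
  refine IsHomogeneous.sum _ _ _ fun τ _ => ?_
  rw [Units.smul_def]
  refine (homogeneousSubmodule σ R _).smul_of_tower_mem _ ?_
  simpa using IsHomogeneous.prod Finset.univ _ (fun _ => d) fun i _ => h (τ i) i

end Determinants

section SpecialPosition

/-- Integral points spanning seven lines which are general enough modulo `23`. -/
def specialPoints (i : Fin 7) : Fin 2 → Fin 4 → ℕ :=
  ![![1, 0, 2 ^ (i : ℕ), 3 ^ (i : ℕ)], ![0, 1, 5 ^ (i : ℕ), 7 ^ (i : ℕ)]]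

/-- The vanishing at five points of the seventh line. -/
def pointConditions : List (Condition 7) :=
  (List.range 5).map fun t => ⟨6, t, []⟩

/-- The vanishing of all first derivatives at one point of the seventh line, and the vanishing at
another point. -/
def gradientConditions : List (Condition 7) :=
  [⟨6, 1, []⟩, ⟨6, 0, [0]⟩, ⟨6, 0, [1]⟩, ⟨6, 0, [2]⟩, ⟨6, 0, [3]⟩]

-- The base `2 ^ 19` exceeds `23 ^ 4 + 455 * 23 ^ 2`, so that digits do not overflow.
set_option maxRecDepth 100000 in
theorem isUnisolventMod_pointConditions :
    isUnisolventMod 23 (2 ^ 19) 4 specialPoints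
      (conditions 4 ![1, 1, 1, 1, 1, 1, 0] ++ pointConditions) = true := by
  decide +kernel

set_option maxRecDepth 100000 in
theorem isUnisolventMod_gradientConditions :
    isUnisolventMod 23 (2 ^ 19) 4 specialPoints
      (conditions 4 ![1, 1, 1, 1, 1, 1, 0] ++ gradientConditions) = true := by
  decide +kernel

set_option maxRecDepth 100000 in
theorem isUnisolventMod_twelve :
    isUnisolventMod 23 (2 ^ 19) 12 specialPoints
      (⟨6, 0, [2, 2]⟩ :: conditions 12 ![3, 3, 3, 3, 3, 3, 2]) = true := by
  decide +kernel

end SpecialPosition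

section Quartics

variable {v : Fin 7 → Fin 2 → C4}

/-- The quartic forms vanishing along the first six of seven lines. -/
abbrev quartics (v : Fin 7 → Fin 2 → C4) : Submodule ℂ R3 :=
  linSys 4 (spannedLine v) ![1, 1, 1, 1, 1, 1, 0]

theorem eq_zero_of_mem_quartics
    (hv : IsUnisolvent 4 (conditions 4 ![1, 1, 1, 1, 1, 1, 0] ++ pointConditions) v) {F : R3}
    (hF : F ∈ quartics v) (hres : lineRestriction (v 6 0) (v 6 1) F = 0) : F = 0 := by
  refine hv.eq_zero (mem_linSys.mp hF).1 fun c hc => ?_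
  obtain hc | hc := List.mem_append.mp hc
  · exact functional_eq_zero_of_mem_linSys hF hc
  · obtain ⟨t, -, rfl⟩ := List.mem_map.mp hc
    rw [Condition.functional_eq_eval, iteratedPDeriv_nil, ← eval_lineRestriction, hres,
      Polynomial.eval_zero]

theorem exists_mem_quartics_lineRestriction_eq
    (hv : IsUnisolvent 4 (conditions 4 ![1, 1, 1, 1, 1, 1, 0] ++ pointConditions) v)
    {g : Polynomial ℂ} (hg : g.natDegree ≤ 4) :
    ∃ F ∈ quartics v, lineRestriction (v 6 0) (v 6 1) F = g := by
  obtain ⟨F, hF, hFg⟩ := exists_mem_linSys_functional_eq (by decide) (by decide) hv rfl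
    fun c => g.eval (c.param : ℂ)
  refine ⟨F, hF, lineRestriction_eq_of_eval_eq (mem_linSys.mp hF).1 hg fun t ht => ?_⟩
  simpa only [Condition.functional_eq_eval, iteratedPDeriv_nil] using
    hFg ⟨6, t, []⟩ (List.mem_map_of_mem (List.mem_range.mpr ht))

theorem exists_mem_quartics_pderiv_eq
    (hv : IsUnisolvent 4 (conditions 4 ![1, 1, 1, 1, 1, 1, 0] ++ gradientConditions) v)
    (y : Fin 4 → ℂ) : ∃ F ∈ quartics v, ∀ k, eval (v 6 0) (pderiv k F) = y k := by
  obtain ⟨F, hF, hFy⟩ := exists_mem_linSys_functional_eq (by decide) (by decide) hv rfl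
    fun c => (c.vars.map y).sum
  refine ⟨F, hF, fun k => ?_⟩
  have hk := hFy ⟨6, 0, [k]⟩ (by fin_cases k <;> simp [gradientConditions])
  simpa [Condition.functional_eq_eval, iteratedPDeriv_cons, iteratedPDeriv_nil] using hk

end Quartics

section Hankel

variable {R : Type*} [CommRing R] {n : ℕ} {q : ℕ → R}

/-- The determinant of the Hankel matrix of size `n + 1` with entries `q (i + j)`. -/
def hankelDet (n : ℕ) (q : ℕ → R) : R :=
  (Matrix.of fun i j : Fin (n + 1) => q (i + j)).det

theorem hankelDet_two (q : ℕ → R) : hankelDet 2 q =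
    q 0 * q 2 * q 4 + 2 * (q 1 * q 2 * q 3) - q 2 ^ 3 - q 0 * q 3 ^ 2 - q 1 ^ 2 * q 4 := by
  simp only [hankelDet, Matrix.det_fin_three, Matrix.of_apply, Fin.val_zero, Fin.val_one,
    Fin.val_two, Nat.reduceAdd]
  ring

theorem hankelDet_mem_pow {I : Ideal R} (hq : ∀ j ≤ 2 * n, q j ∈ I) :
    hankelDet n q ∈ I ^ (n + 1) := by
  simpa [hankelDet] using det_mem_pow_card (s := Finset.univ) (I := I)
    (A := Matrix.of fun i j : Fin (n + 1) => q (i + j)) fun i _ j => hq _ (by lia)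

theorem isHomogeneous_hankelDet {σ : Type*} {q : ℕ → MvPolynomial σ R} {d : ℕ}
    (hq : ∀ j ≤ 2 * n, (q j).IsHomogeneous d) : (hankelDet n q).IsHomogeneous ((n + 1) * d) := by
  simpa [hankelDet] using isHomogeneous_det (A := Matrix.of fun i j : Fin (n + 1) => q (i + j))
    fun i j => hq _ (by lia)

theorem exists_isHomogeneous_one_lineRestriction_eq {σ K : Type*} [Finite σ] [Field K]
    {a b : σ → K} (hab : LinearIndependent K ![a, b]) (x y : K) :
    ∃ S : MvPolynomial σ K, S.IsHomogeneous 1 ∧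
      lineRestriction a b S = Polynomial.C x + Polynomial.X * Polynomial.C y := by
  classical
  cases nonempty_fintype σ
  obtain ⟨g, hg⟩ := (Fintype.linearCombination K ![a, b]).exists_leftInverse_of_injective
    (LinearMap.ker_eq_bot.mpr (linearIndependent_iff_injective_fintypeLinearCombination.mp hab))
  let f : (σ → K) →ₗ[K] K := Fintype.linearCombination K ![x, y] ∘ₗ g
  have hgab (i : Fin 2) : g (![a, b] i) = Pi.single i 1 := by
    simpa [Fintype.linearCombination_apply] using LinearMap.congr_fun hg (Pi.single i 1)
  have hfa : f a = x := by simpa [f] using congrArg (Fintype.linearCombination K ![x, y]) (hgab 0)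
  have hfb : f b = y := by simpa [f] using congrArg (Fintype.linearCombination K ![x, y]) (hgab 1)
  have hf (c : σ → K) : f c = ∑ i, c i * f (Pi.single i 1) := by
    simp only [← smul_eq_mul, ← map_smul, ← map_sum, ← pi_eq_sum_univ']
  refine ⟨∑ i, C (f (Pi.single i 1)) * X i, ?_, ?_⟩
  · exact IsHomogeneous.sum _ _ _ fun i _ => isHomogeneous_C_mul_X _ i
  · rw [← hfa, ← hfb, hf a, hf b]
    simp only [lineRestriction, map_sum, map_mul, aeval_X, algHom_C, Polynomial.algebraMap_eq,
      Finset.mul_sum, ← Finset.sum_add_distrib]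
    exact Finset.sum_congr rfl fun i _ => by ring

theorem hankelDet_mem_lineIdeal_pow {a b : C4} (hab : LinearIndependent ℂ ![a, b]) {q : ℕ → R3}
    (hq : ∀ j ≤ 2 * n, (q j).IsHomogeneous (2 * n) ∧ lineRestriction a b (q j) = Polynomial.X ^ j) :
    hankelDet n q ∈ lineIdeal (Submodule.span ℂ {a, b}) ^ n := by
  obtain ⟨S, hS, hSab⟩ := exists_isHomogeneous_one_lineRestriction_eq hab 1 0
  obtain ⟨T, hT, hTab⟩ := exists_isHomogeneous_one_lineRestriction_eq hab 0 1
  let u : Fin (n + 1) → R3 := fun i => S ^ (n - i) * T ^ (i : ℕ)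
  have hu (i : Fin (n + 1)) : (u i).IsHomogeneous n := by
    simpa [Nat.sub_add_cancel i.is_le] using (hS.pow (n - i)).mul (hT.pow i)
  have huab (i : Fin (n + 1)) : lineRestriction a b (u i) = Polynomial.X ^ (i : ℕ) := by
    simp [u, hSab, hTab]
  suffices hsub : ∀ i j : Fin (n + 1),
      q (i + j) - u i * u j ∈ lineIdeal (Submodule.span ℂ {a, b}) by
    simpa [hankelDet] using
      det_mem_pow_of_sub_mul_mem (A := Matrix.of fun i j : Fin (n + 1) => q (i + j)) u u hsub
  intro i j
  obtain ⟨hhom, hres⟩ := hq (i + j) (by lia)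
  rw [mem_lineIdeal_span_pair_iff (hhom.sub (two_mul n ▸ (hu i).mul (hu j))),
    map_sub, map_mul, huab, huab, hres, pow_add, sub_self]

end Hankel

section Nonvanishing

theorem exists_ne_zero_of_mul_eq_sq {K E : Type*} [Field K] [AddCommGroup E] [Module K E]
    {f g h : E →ₗ[K] K} (hE : 1 < Module.finrank K E)
    (hfgh : ∀ x, f x * h x = g x ^ 2) : ∃ x ≠ 0, f x = 0 ∧ g x = 0 ∧ h x = 0 := by
  have := Module.finite_of_finrank_pos (zero_lt_one.trans hE)
  have hker (l : E →ₗ[K] K) : ∃ x ≠ 0, l x = 0 := by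
    obtain ⟨x, hx, hx0⟩ := Submodule.exists_mem_ne_zero_of_ne_bot
      (l.ker_ne_bot_of_finrank_lt (by simpa using hE))
    exact ⟨x, hx0, hx⟩
  have hg (x : E) (hx : f x = 0) : g x = 0 := by simpa [hx] using (hfgh x).symm
  obtain ⟨x, hx0, hx⟩ := hker f
  by_cases hhx : h x = 0
  · exact ⟨x, hx0, hx, hg x hx, hhx⟩
  have hf (y : E) : f y = 0 := by
    have hyx := hfgh (y + x)
    rw [map_add, map_add, map_add, hx, hg x hx, add_zero, add_zero, mul_add, hfgh,
      add_eq_left] at hyx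
    exact (mul_eq_zero.mp hyx).resolve_right hhx
  obtain ⟨y, hy0, hy⟩ := hker h
  exact ⟨y, hy0, hf y, hg y (hf y), hy⟩

theorem mul_eq_sq_of_hankelDet_two_eq_zero {K A : Type*} [Field K] [NeZero (2 : K)]
    [CommRing A] [Algebra K A] (φ : A →ₐ[K] K) (D : Derivation K A A) {q : ℕ → A}
    (hq0 : φ (q 0) = 1) (hq : ∀ j, 1 ≤ j → j ≤ 4 → φ (q j) = 0) (hdet : hankelDet 2 q = 0) :
    φ (D (q 2)) * φ (D (q 4)) = φ (D (q 3)) ^ 2 := by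
  -- Every term of the determinant has at least two factors in the kernel of `φ`, and only
  -- `q 0 * q 2 * q 4` and `q 0 * q 3 ^ 2` have exactly two.
  have hDD := congrArg (fun x => φ (D (D x))) hdet
  simp only [hankelDet_two, map_sub, map_add, Derivation.leibniz, pow_succ, pow_zero, one_mul,
    smul_eq_mul, map_mul, map_zero, hq0, hq 1 (by lia) (by lia), hq 2 (by lia) (by lia),
    hq 3 (by lia) (by lia), hq 4 (by lia) (by lia)] at hDD
  exact mul_left_cancel₀ (two_ne_zero (α := K)) (by linear_combination hDD)

/-- The differential at `a` of the polynomial function `F`. -/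
def differential {σ K : Type*} [Fintype σ] [CommSemiring K] (a : σ → K) (F : MvPolynomial σ K) :
    (σ → K) →ₗ[K] K :=
  Fintype.linearCombination K fun k => eval a (pderiv k F)

theorem differential_apply {σ K : Type*} [Fintype σ] [CommSemiring K] (a : σ → K)
    (F : MvPolynomial σ K) (w : σ → K) :
    differential a F w = eval a (mkDerivation K (fun k => C (w k)) F) := by
  classical
  induction F using MvPolynomial.induction_on with
  | C r => simp [differential, Fintype.linearCombination_apply]
  | add F G hF hG =>
    rw [map_add, map_add, ← hF, ← hG]
    simp [differential, Fintype.linearCombination_apply, mul_add, Finset.sum_add_distrib]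
  | mul_X F i hF =>
    simp [Derivation.leibniz, ← hF, differential, Fintype.linearCombination_apply, pderiv_X,
      Pi.single_apply, apply_ite (eval a), mul_add, Finset.sum_add_distrib, Finset.mul_sum,
      mul_left_comm, mul_comm (w i)]

theorem exists_differential_eq_zero_of_hankelDet_two_eq_zero {σ K : Type*} [Fintype σ] [Field K]
    [NeZero (2 : K)] (hσ : 4 ≤ Fintype.card σ) {a : σ → K} {q : ℕ → MvPolynomial σ K}
    (hq0 : eval a (q 0) = 1) (hq : ∀ j, 1 ≤ j → j ≤ 4 → eval a (q j) = 0)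
    (hdet : hankelDet 2 q = 0) : ∃ w ≠ 0, ∀ j ≤ 4, differential a (q j) w = 0 := by
  let D₀₁ : (σ → K) →ₗ[K] K × K := (differential a (q 0)).prod (differential a (q 1))
  have hker : 1 < Module.finrank K (LinearMap.ker D₀₁) := by
    have hrank := D₀₁.finrank_range_add_finrank_ker
    have hrange := (LinearMap.range D₀₁).finrank_le
    rw [Module.finrank_fintype_fun_eq_card] at hrank
    rw [Module.finrank_prod, Module.finrank_self] at hrange
    lia
  let f (j : ℕ) : LinearMap.ker D₀₁ →ₗ[K] K := differential a (q j) ∘ₗ (LinearMap.ker D₀₁).subtype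
  have hconic (w : LinearMap.ker D₀₁) : f 2 w * f 4 w = f 3 w ^ 2 := by
    simp only [f, LinearMap.comp_apply, Submodule.subtype_apply, differential_apply]
    exact mul_eq_sq_of_hankelDet_two_eq_zero (aeval a) (mkDerivation K fun k => C (w.1 k)) hq0 hq
      hdet
  obtain ⟨⟨w, hw⟩, hw0, h2, h3, h4⟩ := exists_ne_zero_of_mul_eq_sq hker hconic
  obtain ⟨h0, h1⟩ := Prod.mk.inj (LinearMap.mem_ker.mp hw)
  refine ⟨w, fun h => hw0 (Subtype.ext h), fun j hj => ?_⟩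
  interval_cases j
  exacts [h0, h1, h2, h3, h4]

end Nonvanishing

section Dodecics

variable {v : Fin 7 → Fin 2 → C4} {q : ℕ → R3}

theorem hankelDet_mem_linSys (hab : LinearIndependent ℂ ![v 6 0, v 6 1])
    (hq : ∀ j, q j ∈ quartics v)
    (hres : ∀ j ≤ 4, lineRestriction (v 6 0) (v 6 1) (q j) = Polynomial.X ^ j) :
    hankelDet 2 q ∈ linSys 12 (spannedLine v) ![3, 3, 3, 3, 3, 3, 2] := by
  have hquartic (j : ℕ) := mem_linSys.mp (hq j)
  refine mem_linSys.mpr ⟨isHomogeneous_hankelDet fun j _ => (hquartic j).1, fun i => ?_⟩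
  by_cases hi : i = 6
  · subst hi
    exact hankelDet_mem_lineIdeal_pow hab fun j hj => ⟨(hquartic j).1, hres j hj⟩
  · have hone : (![1, 1, 1, 1, 1, 1, 0] : Fin 7 → ℕ) i = 1 := by decide +revert
    have hthree : (![3, 3, 3, 3, 3, 3, 2] : Fin 7 → ℕ) i = 2 + 1 := by decide +revert
    rw [hthree]
    refine hankelDet_mem_pow fun j _ => ?_
    simpa only [hone, pow_one] using (hquartic j).2 i

theorem eq_sum_smul_of_mem_quartics
    (hv : IsUnisolvent 4 (conditions 4 ![1, 1, 1, 1, 1, 1, 0] ++ pointConditions) v)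
    (hq : ∀ j, q j ∈ quartics v)
    (hres : ∀ j ≤ 4, lineRestriction (v 6 0) (v 6 1) (q j) = Polynomial.X ^ j) {F : R3}
    (hF : F ∈ quartics v) :
    F = ∑ j ∈ Finset.range 5, (lineRestriction (v 6 0) (v 6 1) F).coeff j • q j := by
  refine sub_eq_zero.mp (eq_zero_of_mem_quartics hv ?_ ?_)
  · exact sub_mem hF (sum_mem fun j _ => Submodule.smul_mem _ _ (hq j))
  · have hdeg := Nat.lt_succ_of_le
      (natDegree_lineRestriction_le (v 6 0) (v 6 1) (mem_linSys.mp hF).1)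
    rw [map_sub, map_sum, sub_eq_zero]
    refine ((lineRestriction (v 6 0) (v 6 1) F).as_sum_range_C_mul_X_pow' hdeg).trans
      (Finset.sum_congr rfl fun j hj => ?_)
    rw [map_smul, hres j (Finset.mem_range_succ_iff.mp hj), Polynomial.smul_eq_C_mul]

theorem hankelDet_two_ne_zero
    (hpoint : IsUnisolvent 4 (conditions 4 ![1, 1, 1, 1, 1, 1, 0] ++ pointConditions) v)
    (hgrad : IsUnisolvent 4 (conditions 4 ![1, 1, 1, 1, 1, 1, 0] ++ gradientConditions) v)
    (hq : ∀ j, q j ∈ quartics v)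
    (hres : ∀ j ≤ 4, lineRestriction (v 6 0) (v 6 1) (q j) = Polynomial.X ^ j) :
    hankelDet 2 q ≠ 0 := by
  intro hdet
  have heval (j : ℕ) (hj : j ≤ 4) : eval (v 6 0) (q j) = (0 : ℂ) ^ j := by
    simpa [hres j hj] using (eval_lineRestriction (v 6 0) (v 6 1) (q j) 0).symm
  obtain ⟨w, hw, hqw⟩ := exists_differential_eq_zero_of_hankelDet_two_eq_zero (by simp)
    (heval 0 (by lia)) (fun j h1 h4 => by rw [heval j h4, zero_pow (by lia)]) hdet
  refine hw (funext fun k => ?_)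
  obtain ⟨F, hF, hFk⟩ := exists_mem_quartics_pderiv_eq hgrad (Pi.single k 1)
  have hFw : differential (v 6 0) F w = 0 := by
    rw [eq_sum_smul_of_mem_quartics hpoint hq hres hF, differential_apply, map_sum, map_sum]
    refine Finset.sum_eq_zero fun j hj => ?_
    rw [Derivation.map_smul, smul_eval, ← differential_apply,
      hqw j (Finset.mem_range_succ_iff.mp hj), mul_zero]
  simpa [differential, Fintype.linearCombination_apply, hFk, Pi.single_apply] using hFw

theorem exists_ne_zero_mem_linSys (hab : LinearIndependent ℂ ![v 6 0, v 6 1])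
    (hpoint : IsUnisolvent 4 (conditions 4 ![1, 1, 1, 1, 1, 1, 0] ++ pointConditions) v)
    (hgrad : IsUnisolvent 4 (conditions 4 ![1, 1, 1, 1, 1, 1, 0] ++ gradientConditions) v) :
    ∃ F ∈ linSys 12 (spannedLine v) ![3, 3, 3, 3, 3, 3, 2], F ≠ 0 := by
  have hdual (j : ℕ) : ∃ F ∈ quartics v,
      j ≤ 4 → lineRestriction (v 6 0) (v 6 1) F = Polynomial.X ^ j := by
    by_cases hj : j ≤ 4
    · obtain ⟨F, hF, hFj⟩ := exists_mem_quartics_lineRestriction_eq hpoint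
        ((Polynomial.natDegree_X_pow_le j).trans hj)
      exact ⟨F, hF, fun _ => hFj⟩
    · exact ⟨0, zero_mem _, fun h => absurd h hj⟩
  choose q hq hres using hdual
  exact ⟨hankelDet 2 q, hankelDet_mem_linSys hab hq hres,
    hankelDet_two_ne_zero hpoint hgrad hq hres⟩

end Dodecics

section Uniqueness

theorem finrank_eq_one_of_injective {K V : Type*} [Field K] [AddCommGroup V] [Module K V]
    {φ : V →ₗ[K] K} (hφ : Function.Injective φ) {x : V} (hx : x ≠ 0) : Module.finrank K V = 1 := by
  have := Module.Finite.of_injective φ hφ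
  have := nontrivial_of_ne x 0 hx
  refine le_antisymm ?_ Module.finrank_pos
  simpa using φ.finrank_le_finrank_of_injective hφ

theorem finrank_linSys_eq_one_of_isUnisolvent {s d : ℕ} {v : Fin s → Fin 2 → C4} {m : Fin s → ℕ}
    {c : Condition s} (h : IsUnisolvent d (c :: conditions d m) v)
    (hF : ∃ F ∈ linSys d (spannedLine v) m, F ≠ 0) :
    Module.finrank ℂ (linSys d (spannedLine v) m) = 1 := by
  obtain ⟨F, hF, hF0⟩ := hF
  refine finrank_eq_one_of_injective (x := ⟨F, hF⟩)
    (φ := c.functional v ∘ₗ (linSys d (spannedLine v) m).subtype) ?_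
    fun h0 => hF0 (congrArg Subtype.val h0)
  refine (injective_iff_map_eq_zero _).mpr fun G hG => Subtype.ext ?_
  refine h.eq_zero (mem_linSys.mp G.2).1 fun c' hc' => ?_
  obtain rfl | hc' := List.mem_cons.mp hc'
  · exact hG
  · exact functional_eq_zero_of_mem_linSys G.2 hc'

end Uniqueness

section GeneralPosition

variable {K : Type*} [Field K] {s : ℕ}

theorem generically_linearIndependent {ι : Type*} [Finite ι] {r : ι → Fin s × Fin 2}
    (hr : Function.Injective r) (e : ι ↪ Fin 4) :
    Generically fun v : Fin s → Fin 2 → Fin 4 → K =>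
      LinearIndependent K fun k => v (r k).1 (r k).2 := by
  classical
  cases nonempty_fintype ι
  let ρ : ι × ι → Fin s × Fin 2 × Fin 4 := fun kl => ((r kl.1).1, (r kl.1).2, e kl.2)
  have hρ : Function.Injective ρ := fun kl kl' h => by
    simp only [ρ, Prod.mk.injEq, e.apply_eq_iff_eq] at h
    exact Prod.ext (hr (Prod.ext h.1 h.2.1)) h.2.2
  refine ⟨rename ρ (Matrix.mvPolynomialX ι ι K).det, ?_, fun v hv => ?_⟩
  · exact (map_ne_zero_iff _ (rename_injective ρ hρ)).mpr (Matrix.det_mvPolynomialX_ne_zero _ _)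
  · rw [eval_rename, Matrix.eval_det_mvPolynomialX] at hv
    exact (Matrix.linearIndependent_rows_of_det_ne_zero hv).of_comp (LinearMap.funLeft K K e)

theorem generically_linearIndependent_pair (i : Fin s) :
    Generically fun v : Fin s → Fin 2 → Fin 4 → K => LinearIndependent K ![v i 0, v i 1] := by
  refine (generically_linearIndependent (Prod.mk_right_injective i)
    (Fin.castLEEmb (by lia))).mono fun v hv => ?_
  rwa [show ![v i 0, v i 1] = v i from FinVec.etaExpand_eq _]

theorem generically_span_pair_inf_span_pair_eq_bot {i j : Fin s} (hij : i ≠ j) :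
    Generically fun v : Fin s → Fin 2 → Fin 4 → K =>
      Submodule.span K {v i 0, v i 1} ⊓ Submodule.span K {v j 0, v j 1} = ⊥ := by
  have hr : Function.Injective (Sum.elim (Prod.mk i) (Prod.mk j) : Fin 2 ⊕ Fin 2 → Fin s × Fin 2) :=
    (Prod.mk_right_injective i).sumElim (Prod.mk_right_injective j) (by simp [hij])
  refine (generically_linearIndependent hr finSumFinEquiv.toEmbedding).mono fun v hv => ?_
  simpa [Function.comp_def, Fin.range_fin_succ, Fin.tail, disjoint_iff] using
    (linearIndependent_sum.mp hv).2.2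

end GeneralPosition

/-- The system `𝓛_{12}(3,3,3,3,3,3,2)` for seven general lines has dimension
exactly 1, yet `binom(15,3) = 455 < 457 = 6·70 + 37`, so it has negative
virtual dimension and is special (unexpected). -/
theorem stmt_8 :
    GeneralLines 7 (fun L =>
      Module.finrank ℂ ↥(linSys 12 L ![3, 3, 3, 3, 3, 3, 2]) = 1) ∧
    Nat.choose 15 3 < 6 * 70 + 37 := by
  refine ⟨?_, by decide⟩
  have : Fact (Nat.Prime 23) := ⟨by norm_num⟩
  have hpair := Generically.forall_finite (generically_linearIndependent_pair (K := ℂ) (s := 7))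
  have hdisj := Generically.forall_finite fun ij : {ij : Fin 7 × Fin 7 // ij.1 ≠ ij.2} =>
    generically_span_pair_inf_span_pair_eq_bot (K := ℂ) ij.2
  obtain ⟨P, hP, hPv⟩ := hpair.and <| hdisj.and <|
    (generically_isUnisolvent isUnisolventMod_pointConditions (by decide +kernel)).and <|
    (generically_isUnisolvent isUnisolventMod_gradientConditions (by decide +kernel)).and <|
    generically_isUnisolvent isUnisolventMod_twelve (by decide +kernel)
  refine ⟨P, hP, fun v hv => ?_⟩
  obtain ⟨hpair, hdisj, hpoint, hgrad, htwelve⟩ := hPv v hv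
  refine ⟨hpair, fun i j hij => hdisj ⟨(i, j), hij⟩, ?_⟩
  exact finrank_linSys_eq_one_of_isUnisolvent htwelve
    (exists_ne_zero_mem_linSys (hpair 6) hpoint hgrad)
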